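/- Let G be a finite group of order n, A an abelian group, and m = |Ω| the number of ∼-classes in G×G. Then the pre-cohomology group pH²(G,A) = pZ²(G,A)/B²(G,A) is isomorphic to A^{m−n} ⊕ (A ⊗ G^{ab}), where G^{ab} = G/[G,G]. -/

import Mathlib

variable (G : Type*) [Group G] (A : Type*) [AddCommGroup A]

/-- The coboundary `δ²σ(x,y,z) = σ(y,z) − σ(xy,z) + σ(x,yz) − σ(x,y)`. -/
def d2 (σ : G → G → A) (x y z : G) : A :=
  σ y z - σ (x * y) z + σ x (y * z) - σ x y

variable {G A}

/-- A pre-cocycle: `δ²σ(x,y,z) = 0` whenever `1 ∈ {x,y,z,xy,yz,xyz}`. -/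
def IsPreCocycle (σ : G → G → A) : Prop :=
  ∀ x y z : G, (1 : G) ∈ ({x, y, z, x * y, y * z, x * y * z} : Set G) →
    d2 G A σ x y z = 0

variable (G A)

/-- The group `pZ²(G,A)` of pre-cocycles under pointwise addition. -/
def preZ2 : AddSubgroup (G → G → A) where
  carrier := {σ | IsPreCocycle σ}
  zero_mem' := by intro x y z _; simp [d2]
  add_mem' := by
    intro σ τ hσ hτ x y z h
    have h1 := hσ x y z h
    have h2 := hτ x y z h
    simp only [d2, Pi.add_apply] at *
    linear_combination (norm := abel1) h1 + h2
  neg_mem' := by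
    intro σ hσ x y z h
    have h1 := hσ x y z h
    simp only [d2, Pi.neg_apply] at *
    linear_combination (norm := abel1) -h1

/-- The generating relation `∼` on `G × G`. -/
inductive pairRel : G × G → G × G → Prop
  | left (g : G) : pairRel (g, 1) (1, 1)
  | right (g : G) : pairRel (1, g) (1, 1)
  | inv (g : G) : pairRel (g, g⁻¹) (g⁻¹, g)
  | cyc (g h : G) : g ≠ 1 → h ≠ 1 → h ≠ g⁻¹ →
      pairRel (g, h) (h, h⁻¹ * g⁻¹)
  | swap (g h : G) : g ≠ 1 → h ≠ 1 → h ≠ g⁻¹ →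
      pairRel (g, h) (h⁻¹, g⁻¹)

/-- The group `B²(G,A)` of coboundaries `δ¹ζ(g,h) = ζ(h) − ζ(gh) + ζ(g)`. -/
def cobound2 : AddSubgroup (G → G → A) where
  carrier := {σ | ∃ ζ : G → A, σ = fun g h => ζ h - ζ (g * h) + ζ g}
  zero_mem' := ⟨0, by funext g h; simp⟩
  add_mem' := by
    rintro σ τ ⟨ζ, rfl⟩ ⟨ξ, rfl⟩
    exact ⟨ζ + ξ, by funext g h; simp only [Pi.add_apply]; abel⟩
  neg_mem' := by
    rintro σ ⟨ζ, rfl⟩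
    exact ⟨-ζ, by funext g h; simp only [Pi.neg_apply]; abel⟩


theorem isPreCocycle_iff_aux {G A : Type*} [Group G] [AddCommGroup A] (σ : G → G → A) :
    IsPreCocycle σ ↔ (∀ g, σ 1 g = σ 1 1) ∧ (∀ g, σ g 1 = σ 1 1) ∧
      (∀ g, σ g g⁻¹ = σ g⁻¹ g) ∧
      (∀ g h, σ h (h⁻¹ * g⁻¹) = σ g h + σ (g * h) (g * h)⁻¹ - σ g g⁻¹) ∧
      (∀ g h, σ h⁻¹ g⁻¹ = σ g g⁻¹ + σ h h⁻¹ - σ (g * h) (g * h)⁻¹ + σ 1 1 - σ g h) := by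
  constructor
  · intro H
    have h1 : ∀ g, σ 1 g = σ 1 1 := by
      intro g
      have := H 1 1 g (by simp)
      simp only [d2, one_mul] at this
      linear_combination (norm := abel1) this
    have h2 : ∀ g, σ g 1 = σ 1 1 := by
      intro g
      have := H g 1 1 (by simp)
      simp only [d2, one_mul, mul_one] at this
      linear_combination (norm := abel1) -this
    have h3 : ∀ g, σ g g⁻¹ = σ g⁻¹ g := by
      intro g
      have := H g g⁻¹ g (by simp)
      simp only [d2, mul_inv_cancel, inv_mul_cancel, h1, h2] at this
      linear_combination (norm := abel1) -this
    have h4 : ∀ g h, σ h (h⁻¹ * g⁻¹) = σ g h + σ (g * h) (g * h)⁻¹ - σ g g⁻¹ := by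
      intro g h
      have := H g h (h⁻¹ * g⁻¹) (by simp [mul_assoc])
      simp only [d2, mul_inv_cancel_left] at this
      rw [mul_inv_rev]
      linear_combination (norm := abel1) this
    refine ⟨h1, h2, h3, h4, ?_⟩
    intro g h
    have e1 := H g h h⁻¹ (by simp)
    simp only [d2, mul_inv_cancel, h2] at e1
    have e2 := h4 (g * h) h⁻¹
    simp only [mul_inv_rev, inv_inv, mul_assoc, mul_inv_cancel_left, mul_inv_cancel, mul_one] at e2
    simp only [mul_inv_rev]
    linear_combination (norm := abel1) e2 - e1
  · rintro ⟨h1, h2, h3, h4, h5⟩ x y z hx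
    have e0 : ∀ g h, σ (g * h) h⁻¹ = σ h h⁻¹ + σ 1 1 - σ g h := by
      intro g h
      have e1 := h5 g h
      have e2 := h4 (g * h) h⁻¹
      simp only [mul_inv_rev, inv_inv, mul_assoc, mul_inv_cancel_left, mul_inv_cancel, mul_one]
        at e1 e2
      linear_combination (norm := abel1) e1 - e2
    simp only [Set.mem_insert_iff, Set.mem_singleton_iff] at hx
    simp only [d2]
    rcases hx with rfl | rfl | rfl | hx | hx | hx
    · simp [h1]
    · simp [h1, h2]
    · simp [h2]
    · obtain rfl : x⁻¹ = y := by rw [eq_comm]; exact eq_inv_of_mul_eq_one_right hx.symm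
      have e1 := h5 x⁻¹ z
      have e2 := h4 z⁻¹ x
      have e3 := h3 x
      have e4 := h3 z
      have e5 := h3 (x⁻¹ * z)
      simp only [mul_inv_rev, inv_inv, mul_inv_cancel, h1 z] at e1 e2 e5 ⊢
      linear_combination (norm := abel1) e1 + e2 - e3 + e4 - e5
    · obtain rfl : y⁻¹ = z := by rw [eq_comm]; exact eq_inv_of_mul_eq_one_right hx.symm
      rw [e0, mul_inv_cancel, h2 x]
      abel
    · obtain rfl : (x * y)⁻¹ = z := by rw [eq_comm]; exact eq_inv_of_mul_eq_one_right hx.symm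
      rw [mul_inv_rev, h4, mul_inv_cancel_left, mul_inv_rev]
      abel


theorem pairRel_iff_aux {G : Type*} [Group G] (Q : G × G → Prop)
    (hQ : ∀ p q, pairRel G p q → (Q p ↔ Q q)) {p q : G × G}
    (h : Quot.mk (pairRel G) p = Quot.mk (pairRel G) q) : Q p ↔ Q q := by
  have := congrArg (Quot.lift Q (fun a b hab => propext (hQ a b hab))) h
  exact iff_of_eq this

theorem preCocycle_inj_aux {G A : Type*} [Group G] [AddCommGroup A] (σ : G → G → A)
    (hσ : IsPreCocycle σ) (h0 : ∀ ω : Quot (pairRel G), σ ω.out.1 ω.out.2 = 0) : σ = 0 := by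
  obtain ⟨h1, h2, h3, h4, h5⟩ := (isPreCocycle_iff_aux σ).1 hσ
  have hc : σ 1 1 = 0 := by
    have hQ := pairRel_iff_aux (fun p : G × G => p.1 = 1 ∨ p.2 = 1) (by
      rintro _ _ (g | g | g | ⟨g, h, hg, hh, hgh⟩ | ⟨g, h, hg, hh, hgh⟩)
      · simp
      · simp
      · simp
      · simp only [hg, hh, false_or, false_iff]
        intro h'
        exact hgh (inv_mul_eq_one.1 h')
      · simp [hg, hh]) (Quot.out_eq (Quot.mk (pairRel G) ((1 : G), (1 : G))))
    have h00 := h0 (Quot.mk (pairRel G) ((1 : G), (1 : G)))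
    rcases hQ.2 (by simp) with h | h
    · rw [h, h1] at h00; exact h00
    · rw [h, h2] at h00; exact h00
  have hi : ∀ g, σ g g⁻¹ = 0 := by
    intro x
    by_cases hx : x = 1
    · subst hx; simpa using hc
    have hQ := pairRel_iff_aux (fun p : G × G => p = (x, x⁻¹) ∨ p = (x⁻¹, x)) (by
      rintro _ _ (g | g | g | ⟨g, h, hg, hh, hgh⟩ | ⟨g, h, hg, hh, hgh⟩)
      · simp [hx, Ne.symm hx]
      · simp [hx, Ne.symm hx]
      · simp only [Prod.mk.injEq]
        constructor
        · rintro (⟨rfl, -⟩ | ⟨rfl, -⟩) <;> simp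
        · rintro (⟨h, -⟩ | ⟨h, rfl⟩)
          · obtain rfl : g = x⁻¹ := by rw [← h, inv_inv]
            simp
          · simp
      · simp only [Prod.mk.injEq]
        constructor
        · rintro (⟨rfl, rfl⟩ | ⟨rfl, rfl⟩) <;> simp at hgh
        · rintro (⟨rfl, h⟩ | ⟨rfl, h⟩) <;> simp [hg] at h
      · simp only [Prod.mk.injEq]
        constructor
        · rintro (⟨rfl, rfl⟩ | ⟨rfl, rfl⟩) <;> simp at hgh
        · rintro (⟨rfl, h⟩ | ⟨h', h⟩)
          · simp at h; simp [h] at hgh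
          · exact absurd ((inv_injective h').trans h.symm) hgh)
      (Quot.out_eq (Quot.mk (pairRel G) (x, x⁻¹)))
    have h00 := h0 (Quot.mk (pairRel G) (x, x⁻¹))
    rcases hQ.2 (by simp) with h | h
    · rw [h] at h00; exact h00
    · rw [h] at h00; rw [h3]; exact h00
  funext g h
  have hQ := pairRel_iff_aux (fun p : G × G => σ p.1 p.2 = 0) (by
      rintro _ _ (g | g | g | ⟨g, h, -, -, -⟩ | ⟨g, h, -, -, -⟩)
      · simp [h2, hc]
      · simp [h1, hc]
      · simp [h3]
      · simp only [h4, hi]; simp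
      · simp only [h5, hi, hc]; simp) (Quot.out_eq (Quot.mk (pairRel G) (g, h)))
  exact hQ.1 (h0 _)

/-- Rotation of a pair. -/
def cycAux {G : Type*} [Group G] (p : G × G) : G × G := (p.2, p.2⁻¹ * p.1⁻¹)

/-- Reflection of a pair. -/
def swapAux {G : Type*} [Group G] (p : G × G) : G × G := (p.2⁻¹, p.1⁻¹)

/-- Nondegenerate pairs. -/
def ndAux {G : Type*} [Group G] (p : G × G) : Prop := p.1 ≠ 1 ∧ p.2 ≠ 1 ∧ p.2 ≠ p.1⁻¹

/-- Being in the rotation orbit. -/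
def orbAux {G : Type*} [Group G] (r p : G × G) : Prop :=
  p = r ∨ cycAux p = r ∨ cycAux (cycAux p) = r

theorem cyc3_aux {G : Type*} [Group G] (p : G × G) : cycAux (cycAux (cycAux p)) = p := by
  simp [cycAux]

theorem swapcyc_aux {G : Type*} [Group G] (p : G × G) :
    swapAux (cycAux p) = cycAux (cycAux (swapAux p)) := by
  simp [cycAux, swapAux]

theorem swapswap_aux {G : Type*} [Group G] (p : G × G) : swapAux (swapAux p) = p := by
  simp [swapAux]

theorem orb_cyc_aux {G : Type*} [Group G] (r p : G × G) : orbAux r (cycAux p) ↔ orbAux r p := by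
  simp only [orbAux, cyc3_aux]; tauto

theorem nd_cyc_aux {G : Type*} [Group G] (p : G × G) (hp : ndAux p) : ndAux (cycAux p) := by
  obtain ⟨g, h⟩ := p
  obtain ⟨hg, hh, hgh⟩ := hp
  refine ⟨hh, ?_, ?_⟩
  · intro h'; exact hgh (inv_mul_eq_one.1 h')
  · simpa [cycAux] using hg

theorem nd_swap_aux {G : Type*} [Group G] (p : G × G) (hp : ndAux p) : ndAux (swapAux p) := by
  obtain ⟨g, h⟩ := p
  obtain ⟨hg, hh, hgh⟩ := hp
  refine ⟨by simpa [swapAux] using hh, by simpa [swapAux] using hg, ?_⟩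
  simp only [swapAux, inv_inv] at *
  exact fun h' => hgh h'.symm

theorem nd_rel_aux {G : Type*} [Group G] (p q : G × G) (h : pairRel G p q) :
    ndAux p ↔ ndAux q := by
  rcases h with (g | g | g | ⟨g, h, hg, hh, hgh⟩ | ⟨g, h, hg, hh, hgh⟩)
  · simp [ndAux]
  · simp [ndAux]
  · simp [ndAux]
  · exact iff_of_true ⟨hg, hh, hgh⟩ (nd_cyc_aux (g, h) ⟨hg, hh, hgh⟩)
  · exact iff_of_true ⟨hg, hh, hgh⟩ (nd_swap_aux (g, h) ⟨hg, hh, hgh⟩)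

theorem orb_or_aux {G : Type*} [Group G] (r p : G × G) (hp : ndAux p)
    (h : Quot.mk (pairRel G) r = Quot.mk (pairRel G) p) : orbAux r p ∨ orbAux r (swapAux p) := by
  have hQ := pairRel_iff_aux (fun p : G × G => ndAux p ∧ (orbAux r p ∨ orbAux r (swapAux p))) (by
    intro p q hpq
    have hnd := nd_rel_aux p q hpq
    rcases hpq with (g | g | g | ⟨g, h, hg, hh, hgh⟩ | ⟨g, h, hg, hh, hgh⟩)
    · simp [ndAux]
    · simp [ndAux]
    · simp [ndAux]
    · change _ ↔ ndAux (cycAux (g, h)) ∧ (orbAux r (cycAux (g, h)) ∨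
        orbAux r (swapAux (cycAux (g, h))))
      rw [swapcyc_aux, orb_cyc_aux, orb_cyc_aux, orb_cyc_aux, hnd]
      rfl
    · change _ ↔ ndAux (swapAux (g, h)) ∧ (orbAux r (swapAux (g, h)) ∨
        orbAux r (swapAux (swapAux (g, h))))
      rw [swapswap_aux, hnd, or_comm]
      rfl) h
  have hr : ndAux r := (pairRel_iff_aux _ nd_rel_aux h).2 hp
  exact (hQ.1 ⟨hr, Or.inl (Or.inl rfl)⟩).2

theorem orb_excl_aux {G : Type*} [Group G] (r p : G × G) (hp : ndAux p) (h1 : orbAux r p)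
    (h2 : orbAux r (swapAux p)) : False := by
  have h3 : swapAux p = p ∨ swapAux p = cycAux p ∨ swapAux p = cycAux (cycAux p) := by
    have key := @cyc3_aux G _
    unfold orbAux at h1 h2
    generalize swapAux p = q at *
    have e1 := key p
    have e2 := key q
    rcases h1 with h1 | h1 | h1 <;> rcases h2 with h2 | h2 | h2 <;> grind
  obtain ⟨g, h⟩ := p
  obtain ⟨hg, hh, hgh⟩ := hp
  simp only [swapAux, cycAux, Prod.mk.injEq] at h3 hg hh hgh
  rcases h3 with ⟨-, h3⟩ | ⟨-, h3⟩ | ⟨h3, -⟩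
  · exact hgh h3.symm
  · simp [hh] at h3
  · simp [hg] at h3

open Classical in
theorem preCocycle_surj_aux {G A : Type*} [Group G] [AddCommGroup A]
    (f : Quot (pairRel G) → A) :
    ∃ σ : G → G → A, IsPreCocycle σ ∧ ∀ ω : Quot (pairRel G), σ ω.out.1 ω.out.2 = f ω := by
  let F : G × G → A := fun p => f (Quot.mk _ p)
  let c : A := F (1, 1)
  let i : G → A := fun g => F (g, g⁻¹)
  let r : G × G → G × G := fun p => (Quot.mk (pairRel G) p).out
  let U : G × G → A := fun p => F p + i ((r p).1 * (r p).2)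
  let S : G × G → A := fun p => if ndAux p then
    (if orbAux (r p) p then U p - i (p.1 * p.2) else i p.1 + i p.2 + c - U p) else F p
  have hFrel : ∀ p q, pairRel G p q → F p = F q := fun p q h => congrArg f (Quot.sound h)
  have hrrel : ∀ p q, pairRel G p q → r p = r q := fun p q h => by
    simp only [r]; rw [Quot.sound h]
  have hUrel : ∀ p q, pairRel G p q → U p = U q := fun p q h => by
    simp only [U]; rw [hFrel p q h, hrrel p q h]
  have hSd : ∀ p, ¬ ndAux p → S p = F p := fun p hp => if_neg hp
  have hSo : ∀ p, ndAux p → orbAux (r p) p → S p = U p - i (p.1 * p.2) := fun p hp ho => by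
    simp only [S]; rw [if_pos hp, if_pos ho]
  have hSn : ∀ p, ndAux p → ¬ orbAux (r p) p → S p = i p.1 + i p.2 + c - U p :=
    fun p hp ho => by simp only [S]; rw [if_pos hp, if_neg ho]
  have hS1 : ∀ g, S (1, g) = c := fun g => by
    rw [hSd _ (by simp [ndAux])]; exact hFrel _ _ (.right g)
  have hS2 : ∀ g, S (g, 1) = c := fun g => by
    rw [hSd _ (by simp [ndAux])]; exact hFrel _ _ (.left g)
  have hS3 : ∀ g, S (g, g⁻¹) = i g := fun g => hSd _ (by simp [ndAux])
  have hi : ∀ g, i g⁻¹ = i g := fun g => by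
    have := hFrel _ _ (pairRel.inv g)
    simp only [i, inv_inv]; exact this.symm
  have hi1 : i 1 = c := by simp [i, c]
  refine ⟨fun g h => S (g, h), ?_, ?_⟩
  · rw [isPreCocycle_iff_aux]
    simp only [hS1, hS2, hS3, implies_true, true_and]
    have hrev : ∀ g h, i (h⁻¹ * g⁻¹) = i (g * h) := fun g h => by rw [← mul_inv_rev, hi]
    refine ⟨?_, ?_, ?_⟩
    · intro g
      have := hS3 g⁻¹
      rw [inv_inv] at this
      rw [this, hi]
    · intro g h
      by_cases hnd : ndAux (g, h)
      · have hrel : pairRel G (g, h) (cycAux (g, h)) := .cyc g h hnd.1 hnd.2.1 hnd.2.2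
        have hnd' := nd_cyc_aux _ hnd
        have hO := orb_cyc_aux (r (g, h)) (g, h)
        rw [show (h, h⁻¹ * g⁻¹) = cycAux (g, h) from rfl]
        by_cases ho : orbAux (r (g, h)) (g, h)
        · rw [hSo _ hnd ho, hSo _ hnd' (by rw [← hrrel _ _ hrel]; exact hO.2 ho),
            ← hUrel _ _ hrel]
          simp only [cycAux, mul_inv_cancel_left, hi]
          abel
        · rw [hSn _ hnd ho, hSn _ hnd' (by rw [← hrrel _ _ hrel]; exact fun h' => ho (hO.1 h')),
            ← hUrel _ _ hrel]
          simp only [cycAux, hrev]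
          abel
      · by_cases hg : g = 1
        · subst hg; simp [hS1, hS3, hi1]
        by_cases hh : h = 1
        · subst hh; simp [hS1, hS2]
        have hgh : h = g⁻¹ := by
          by_contra hgh; exact hnd ⟨hg, hh, hgh⟩
        subst hgh
        simp [hS2, hS3, hi1]
    · intro g h
      by_cases hnd : ndAux (g, h)
      · have hrel : pairRel G (g, h) (swapAux (g, h)) := .swap g h hnd.1 hnd.2.1 hnd.2.2
        have hnd' := nd_swap_aux _ hnd
        rw [show (h⁻¹, g⁻¹) = swapAux (g, h) from rfl]
        by_cases ho : orbAux (r (g, h)) (g, h)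
        · rw [hSo _ hnd ho, hSn _ hnd' (by
              rw [← hrrel _ _ hrel]; exact fun h' => orb_excl_aux _ _ hnd ho h'),
            ← hUrel _ _ hrel]
          simp only [swapAux, hi]
          abel
        · have ho' : orbAux (r (g, h)) (swapAux (g, h)) :=
            (orb_or_aux (r (g, h)) (g, h) hnd (Quot.out_eq _)).resolve_left ho
          rw [hSn _ hnd ho, hSo _ hnd' (by rw [← hrrel _ _ hrel]; exact ho'), ← hUrel _ _ hrel]
          simp only [swapAux, hrev]
          abel
      · by_cases hg : g = 1
        · subst hg; simp [hS1, hS2, hi1]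
        by_cases hh : h = 1
        · subst hh; simp [hS1, hS2, hi1]
        have hgh : h = g⁻¹ := by
          by_contra hgh; exact hnd ⟨hg, hh, hgh⟩
        subst hgh
        simp [hS3, hi1, hi]
  · intro ω
    have hm : Quot.mk (pairRel G) ω.out = ω := Quot.out_eq ω
    have hF : F ω.out = f ω := congrArg f hm
    have hr : r ω.out = ω.out := by simp only [r]; rw [hm]
    change S ω.out = f ω
    by_cases hnd : ndAux ω.out
    · rw [hSo _ hnd (by rw [hr]; exact Or.inl rfl)]
      simp only [U]
      rw [hr, hF]
      abel
    · rw [hSd _ hnd, hF]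

open TensorProduct in
theorem hom_coker_aux {V W H A : Type*} [AddCommGroup V] [AddCommGroup W] [AddCommGroup H]
    [AddCommGroup A] [Module.Free ℤ V] [Module.Finite ℤ V]
    [Module.Free ℤ W] [Module.Finite ℤ W] [Finite H]
    (P : W →ₗ[ℤ] V) (π : V →ₗ[ℤ] H) (hP : Function.Exact P π) (hπ : Function.Surjective π)
    (k : ℕ) (hk : k = Module.finrank ℤ W - Module.finrank ℤ V) :
    ∃ Θ : (W →ₗ[ℤ] A) →+ (Fin k → A) × (A ⊗[ℤ] H), Function.Surjective Θ ∧
      ∀ φ, Θ φ = 0 ↔ ∃ ψ : V →ₗ[ℤ] A, φ = ψ ∘ₗ P := by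
  classical
  have hker : LinearMap.ker π = LinearMap.range P := hP.linearMap_ker_eq
  set N := LinearMap.range P with hN
  have hrank : Module.finrank ℤ N = Module.finrank ℤ V := by
    have : N.toAddSubgroup.FiniteIndex := by
      rw [← hker]
      have : Finite (V ⧸ (LinearMap.ker π).toAddSubgroup) :=
        Finite.of_equiv H (π.quotKerEquivOfSurjective hπ).symm.toEquiv
      exact AddSubgroup.finiteIndex_of_finite_quotient
    exact AddSubgroup.finrank_eq_of_finiteIndex N.toAddSubgroup
  obtain ⟨b, a, c, hc⟩ := Submodule.exists_smith_normal_form_of_rank_eq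
    (Module.Free.chooseBasis ℤ V) hrank
  let P' : W →ₗ[ℤ] N := P.rangeRestrict
  have hP' : Function.Surjective P' := P.surjective_rangeRestrict
  have : Module.Free ℤ N := Module.Free.of_basis c
  obtain ⟨s, hs⟩ := Module.projective_lifting_property P' LinearMap.id hP'
  have hs' : ∀ x, P' (s x) = x := fun x => LinearMap.congr_fun hs x
  let K := LinearMap.ker P'
  have hKr : k = Module.finrank ℤ K := by
    have h1 := Submodule.finrank_quotient_add_finrank K
    rw [(P'.quotKerEquivOfSurjective hP').finrank_eq] at h1
    omega
  let d : Module.Basis (Fin k) ℤ K := (Module.finBasis ℤ K).reindex (finCongr hKr.symm)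
  let r : W →ₗ[ℤ] K := (LinearMap.id - s ∘ₗ P').codRestrict K (by
    intro w; simp [K, hs'])
  have hr : ∀ w, (r w : W) = w - s (P' w) := fun w => rfl
  have hrs : ∀ x, r (s x) = 0 := fun x => Subtype.ext (by rw [hr, hs']; simp)
  have hrK : ∀ x : K, r x = x := fun x => Subtype.ext (by
    rw [hr, LinearMap.mem_ker.1 x.2]; simp)
  let Θ : (W →ₗ[ℤ] A) →+ (Fin k → A) × (A ⊗[ℤ] H) :=
    { toFun := fun φ => (fun j => φ (d j), ∑ i, φ (s (c i)) ⊗ₜ π (b i))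
      map_zero' := by ext <;> simp
      map_add' := by
        intro φ ψ
        ext
        · simp
        · simp [TensorProduct.add_tmul, Finset.sum_add_distrib] }
  have hΘ : ∀ φ, Θ φ = (fun j => φ (d j), ∑ i, φ (s (c i)) ⊗ₜ π (b i)) := fun _ => rfl
  have htens : ∀ t : A ⊗[ℤ] V, ∃ y : Module.Free.ChooseBasisIndex ℤ V → A, t = ∑ i, y i ⊗ₜ b i := by
    intro t
    induction t with
    | zero => exact ⟨0, by simp⟩
    | add x y hx hy =>
      obtain ⟨u, rfl⟩ := hx
      obtain ⟨v, rfl⟩ := hy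
      exact ⟨u + v, by simp [TensorProduct.add_tmul, Finset.sum_add_distrib]⟩
    | tmul x v =>
      refine ⟨fun i => b.repr v i • x, ?_⟩
      conv_lhs => rw [← b.sum_repr v]
      rw [TensorProduct.tmul_sum]
      exact Finset.sum_congr rfl fun i _ => (TensorProduct.smul_tmul _ _ _).symm
  have htens2 : ∀ t : A ⊗[ℤ] N, ∃ y : Module.Free.ChooseBasisIndex ℤ V → A, t = ∑ i, y i ⊗ₜ c i := by
    intro t
    induction t with
    | zero => exact ⟨0, by simp⟩
    | add x y hx hy =>
      obtain ⟨u, rfl⟩ := hx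
      obtain ⟨v, rfl⟩ := hy
      exact ⟨u + v, by simp [TensorProduct.add_tmul, Finset.sum_add_distrib]⟩
    | tmul x v =>
      refine ⟨fun i => c.repr v i • x, ?_⟩
      conv_lhs => rw [← c.sum_repr v]
      rw [TensorProduct.tmul_sum]
      exact Finset.sum_congr rfl fun i _ => (TensorProduct.smul_tmul _ _ _).symm
  have hex : Function.Exact N.subtype π := by
    intro x
    rw [hP x]
    simp [hN]
  refine ⟨Θ, ?_, ?_⟩
  · rintro ⟨x, t⟩
    obtain ⟨t', rfl⟩ := LinearMap.lTensor_surjective A hπ t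
    obtain ⟨y, rfl⟩ := htens t'
    refine ⟨(d.constr ℤ x) ∘ₗ r + (c.constr ℤ y) ∘ₗ P', ?_⟩
    rw [hΘ]
    refine Prod.ext ?_ ?_
    · funext j
      have : P' (d j : W) = 0 := (d j).2
      simp only [LinearMap.add_apply, LinearMap.comp_apply, hrK, this, map_zero, add_zero]
      exact d.constr_basis ℤ x j
    · simp [hrs, hs', Module.Basis.constr_basis]
  · intro φ
    rw [hΘ, Prod.ext_iff]
    constructor
    · rintro ⟨h1, h2⟩
      have hK0 : φ ∘ₗ K.subtype = 0 := d.ext fun j => congrFun h1 j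
      have h3 : φ = φ ∘ₗ s ∘ₗ P' := by
        ext w
        have := LinearMap.congr_fun hK0 (r w)
        simp only [LinearMap.comp_apply, Submodule.subtype_apply, hr, map_sub,
          LinearMap.zero_apply, sub_eq_zero] at this
        exact this
      have h4 : LinearMap.lTensor A π (∑ i, φ (s (c i)) ⊗ₜ b i) = 0 := by
        simpa using h2
      obtain ⟨t, ht⟩ := (lTensor_exact A hex hπ _).1 h4
      obtain ⟨y, rfl⟩ := htens2 t
      have h5 : ∀ i, φ (s (c i)) = a i • y i := by
        intro i
        have := congrArg (fun z => TensorProduct.equivFinsuppOfBasisRight b z i) ht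
        simp [TensorProduct.equivFinsuppOfBasisRight_apply_tmul_apply, hc,
          Finsupp.single_apply, Finset.sum_ite_eq] at this
        simpa using this.symm
      refine ⟨b.constr ℤ y, ?_⟩
      have h6 : φ ∘ₗ s = (b.constr ℤ y) ∘ₗ N.subtype := by
        refine c.ext fun i => ?_
        simp [hc, h5, Module.Basis.constr_basis]
      rw [h3, ← LinearMap.comp_assoc, h6]
      rfl
    · rintro ⟨ψ, rfl⟩
      have hPP : ∀ w, P w = (P' w : V) := fun _ => rfl
      refine ⟨?_, ?_⟩
      · funext j
        have : P' (d j : W) = 0 := (d j).2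
        simp [hPP, this]
      · refine Finset.sum_eq_zero fun i _ => ?_
        have : π (c i : V) = 0 := (hP _).2 (c i).2
        simp only [LinearMap.comp_apply, hPP, hs', hc, map_smul] at this ⊢
        rw [TensorProduct.smul_tmul, this, TensorProduct.tmul_zero]

theorem cobound_isPreCocycle_aux {G A : Type*} [Group G] [AddCommGroup A] (ζ : G → A) :
    IsPreCocycle (fun g h => ζ h - ζ (g * h) + ζ g) := by
  intro x y z _
  simp only [d2, mul_assoc]
  abel

/-- The relation map. -/
noncomputable def relMapAux (G : Type*) [Group G] : (Quot (pairRel G) →₀ ℤ) →ₗ[ℤ] (G →₀ ℤ) :=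
  Finsupp.linearCombination ℤ (fun ω : Quot (pairRel G) =>
    Finsupp.single ω.out.2 (1 : ℤ) - Finsupp.single (ω.out.1 * ω.out.2) 1
      + Finsupp.single ω.out.1 1)

/-- The projection to the abelianization. -/
noncomputable def abMapAux (G : Type*) [Group G] :
    (G →₀ ℤ) →ₗ[ℤ] Additive (Abelianization G) :=
  Finsupp.linearCombination ℤ (fun g : G => Additive.ofMul (Abelianization.of g))

theorem abMap_surj_aux (G : Type*) [Group G] : Function.Surjective (abMapAux G) := by
  intro x
  obtain ⟨g, hg⟩ := QuotientGroup.mk_surjective (Additive.toMul x)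
  refine ⟨Finsupp.single g 1, ?_⟩
  simp only [abMapAux, Finsupp.linearCombination_single, one_smul]
  exact hg

theorem exact_aux (G : Type*) [Group G] : Function.Exact (relMapAux G) (abMapAux G) := by
  rw [LinearMap.exact_iff]
  apply le_antisymm
  · let q := (LinearMap.range (relMapAux G)).mkQ
    let ζ : G → (G →₀ ℤ) ⧸ (LinearMap.range (relMapAux G)) := fun g => q (Finsupp.single g 1)
    have h0 := preCocycle_inj_aux _ (cobound_isPreCocycle_aux ζ) (by
      intro ω
      simp only [ζ, ← map_sub, ← map_add]
      refine (Submodule.Quotient.mk_eq_zero _).2 ⟨Finsupp.single ω 1, ?_⟩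
      simp [relMapAux])
    have hadd : ∀ g h, ζ (g * h) = ζ g + ζ h := by
      intro g h
      have := congrFun (congrFun h0 g) h
      simp only [Pi.zero_apply] at this
      linear_combination (norm := abel1) -this
    let M : G →* Multiplicative ((G →₀ ℤ) ⧸ (LinearMap.range (relMapAux G))) :=
      MonoidHom.mk' (fun g => Multiplicative.ofAdd (ζ g)) (by
        intro g h
        rw [hadd]; rfl)
    let L : Additive (Abelianization G) →+ ((G →₀ ℤ) ⧸ (LinearMap.range (relMapAux G))) :=
      MonoidHom.toAdditiveLeft (Abelianization.lift M)
    have hL : L.toIntLinearMap ∘ₗ abMapAux G = q := by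
      apply Finsupp.lhom_ext'
      intro g
      ext
      simp only [abMapAux, LinearMap.comp_apply, Finsupp.lsingle_apply,
        Finsupp.linearCombination_single, one_smul]
      change Multiplicative.toAdd (Abelianization.lift M (Abelianization.of g)) = _
      rw [Abelianization.lift_apply_of]
      rfl
    intro v hv
    have h1 : q v = 0 := by
      rw [← hL, LinearMap.comp_apply, LinearMap.mem_ker.1 hv, map_zero]
    exact (Submodule.Quotient.mk_eq_zero _).1 h1
  · rw [LinearMap.range_le_ker_iff]
    apply Finsupp.lhom_ext'
    intro ω
    ext
    simp [relMapAux, abMapAux, Finsupp.linearCombination_single]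

/-- For a finite group `G` of order `n` and an abelian group `A`,
`pH²(G,A) = pZ²(G,A)/B²(G,A)` is isomorphic to
`A^{m−n} ⊕ (A ⊗ G^{ab})`, where `m = |Ω|`. -/
theorem preCohomology_structure [Fintype G] :
    Nonempty
      ((preZ2 G A ⧸ (cobound2 G A).addSubgroupOf (preZ2 G A)) ≃+
        (Fin (Nat.card (Quot (pairRel G)) - Fintype.card G) → A) ×
          TensorProduct ℤ A (Additive (Abelianization G))) := by
  classical
  have : Finite (Quot (pairRel G)) := inferInstance
  have : Fintype (Quot (pairRel G)) := Fintype.ofFinite _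
  have : Finite (Abelianization G) := Quotient.finite _
  have : Finite (Additive (Abelianization G)) := ‹Finite (Abelianization G)›
  obtain ⟨Θ, hΘs, hΘk⟩ := hom_coker_aux (A := A) (relMapAux G) (abMapAux G) (exact_aux G)
    (abMap_surj_aux G) (Nat.card (Quot (pairRel G)) - Fintype.card G)
    (by simp [Nat.card_eq_fintype_card])
  let E : preZ2 G A →+ ((Quot (pairRel G) →₀ ℤ) →ₗ[ℤ] A) :=
    { toFun := fun σ => Finsupp.linearCombination ℤ (fun ω => σ.1 ω.out.1 ω.out.2)
      map_zero' := by
        apply Finsupp.lhom_ext'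
        intro ω
        ext
        simp
      map_add' := by
        intro σ τ
        apply Finsupp.lhom_ext'
        intro ω
        ext
        simp }
  have hE : ∀ σ ω, E σ (Finsupp.single ω 1) = σ.1 ω.out.1 ω.out.2 := by
    intro σ ω
    simp [E]
  have hEs : Function.Surjective E := by
    intro φ
    obtain ⟨σ, h1, h2⟩ := preCocycle_surj_aux (fun ω => φ (Finsupp.single ω 1))
    refine ⟨⟨σ, h1⟩, ?_⟩
    apply Finsupp.lhom_ext'
    intro ω
    ext
    simp only [LinearMap.comp_apply, Finsupp.lsingle_apply, hE]
    exact h2 ω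
  let T := Θ.comp E
  have hT : Function.Surjective T := hΘs.comp hEs
  have hker : (cobound2 G A).addSubgroupOf (preZ2 G A) = T.ker := by
    ext σ
    rw [AddSubgroup.mem_addSubgroupOf, AddMonoidHom.mem_ker]
    change _ ↔ Θ (E σ) = 0
    rw [hΘk]
    constructor
    · rintro ⟨ζ, hζ⟩
      refine ⟨Finsupp.linearCombination ℤ ζ, ?_⟩
      apply Finsupp.lhom_ext'
      intro ω
      ext
      simp only [LinearMap.comp_apply, Finsupp.lsingle_apply, hE, hζ]
      simp [relMapAux]
    · rintro ⟨ψ, hψ⟩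
      refine ⟨fun g => ψ (Finsupp.single g 1), ?_⟩
      have hδ := cobound_isPreCocycle_aux (fun g : G => ψ (Finsupp.single g 1))
      have := preCocycle_inj_aux _ ((preZ2 G A).sub_mem σ.2 hδ) (by
        intro ω
        have := LinearMap.congr_fun hψ (Finsupp.single ω 1)
        rw [hE] at this
        simp only [Pi.sub_apply, this]
        simp [relMapAux])
      exact sub_eq_zero.1 this
  exact ⟨(QuotientAddGroup.quotientAddEquivOfEq hker).trans
    (QuotientAddGroup.quotientKerEquivOfSurjective T hT)⟩
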